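/- arXiv:2002.09879 — 3 statements merged into one kernel-verified Lean document; each statement's English description precedes it below -/
import Mathlib

section
/- Let $K(x) = \frac{x^\perp}{2\pi|x|^2}$ be the Biot-Savart kernel on $\mathbb{R}^2$ and $K_\alpha = K * G_\alpha$, where $G_\alpha$ is the fundamental solution of $I - \alpha\Delta$. Then there exists a universal constant $C$ such that $|K_\alpha(x) - K(x)| \leq C\sqrt{\alpha}/|x|^2$ for all $x \neq 0$ and all $\alpha > 0$. -/
open MeasureTheory Real

/-- The Bessel-type fundamental solution of `I - αΔ` on `ℝ²`. -/
noncomputable def besselG (α : ℝ) (x : ℝ × ℝ) : ℝ :=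
  (1 / (4 * π * α)) * ∫ t in Set.Ioi (0 : ℝ),
    (1 / t) * Real.exp (-(π * (x.1 ^ 2 + x.2 ^ 2)) / (t * α)) * Real.exp (-t / (4 * π))

/-- The Biot-Savart kernel `K(x) = x^⊥ / (2π|x|²)`. -/
noncomputable def BSK (x : ℝ × ℝ) : ℝ × ℝ :=
  (-x.2 / (2 * π * (x.1 ^ 2 + x.2 ^ 2)), x.1 / (2 * π * (x.1 ^ 2 + x.2 ^ 2)))

/-- The smoothed kernel `K_α = K * G_α`. -/
noncomputable def BSKα (α : ℝ) (x : ℝ × ℝ) : ℝ × ℝ :=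
  (∫ y : ℝ × ℝ, (BSK (x.1 - y.1, x.2 - y.2)).1 * besselG α y,
   ∫ y : ℝ × ℝ, (BSK (x.1 - y.1, x.2 - y.2)).2 * besselG α y)

lemma aux_gauss {b : ℝ} (hb : 0 < b) :
    Integrable (fun y : ℝ × ℝ => Real.exp (-(b * (y.1 ^ 2 + y.2 ^ 2)))) ∧
      ∫ y : ℝ × ℝ, Real.exp (-(b * (y.1 ^ 2 + y.2 ^ 2))) = π / b := by
  have e : (fun y : ℝ × ℝ => Real.exp (-(b * (y.1 ^ 2 + y.2 ^ 2)))) =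
      fun y : ℝ × ℝ => Real.exp (-b * y.1 ^ 2) * Real.exp (-b * y.2 ^ 2) := by
    funext y
    rw [← Real.exp_add]; congr 1; ring
  constructor
  · rw [e]
    exact (integrable_exp_neg_mul_sq hb).mul_prod (integrable_exp_neg_mul_sq hb)
  · rw [e, Measure.volume_eq_prod,
      integral_prod_mul (fun u : ℝ => Real.exp (-b * u ^ 2)) (fun u : ℝ => Real.exp (-b * u ^ 2)),
      integral_gaussian]
    exact Real.mul_self_sqrt (by positivity)

lemma aux_fub (c : ℝ → ℝ) (hm : Measurable c) (hc : ∀ t, 0 < t → 0 ≤ c t) {β : ℝ} (hβ : 0 < β)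
    (hi : Integrable (fun t => c t * (t * β)) (volume.restrict (Set.Ioi 0))) :
    Integrable (fun p : (ℝ × ℝ) × ℝ =>
        c p.2 * Real.exp (-(π * (p.1.1 ^ 2 + p.1.2 ^ 2)) / (p.2 * β)))
        ((volume : Measure (ℝ × ℝ)).prod (volume.restrict (Set.Ioi 0))) ∧
      ∫ y : ℝ × ℝ, ∫ t in Set.Ioi (0 : ℝ),
        c t * Real.exp (-(π * (y.1 ^ 2 + y.2 ^ 2)) / (t * β)) =
      ∫ t in Set.Ioi (0 : ℝ), c t * (t * β) := by
  have key : ∀ t : ℝ, 0 < t → Integrable (fun y : ℝ × ℝ =>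
      c t * Real.exp (-(π * (y.1 ^ 2 + y.2 ^ 2)) / (t * β))) ∧
      ∫ y : ℝ × ℝ, c t * Real.exp (-(π * (y.1 ^ 2 + y.2 ^ 2)) / (t * β)) = c t * (t * β) := by
    intro t ht
    have hb : 0 < π / (t * β) := by positivity
    have e : ∀ y : ℝ × ℝ, -(π * (y.1 ^ 2 + y.2 ^ 2)) / (t * β)
        = -(π / (t * β) * (y.1 ^ 2 + y.2 ^ 2)) := by intro y; ring
    simp_rw [e]
    refine ⟨(aux_gauss hb).1.const_mul _, ?_⟩
    rw [integral_const_mul, (aux_gauss hb).2]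
    congr 1
    field_simp
  have hI : Integrable (fun p : (ℝ × ℝ) × ℝ =>
        c p.2 * Real.exp (-(π * (p.1.1 ^ 2 + p.1.2 ^ 2)) / (p.2 * β)))
        ((volume : Measure (ℝ × ℝ)).prod (volume.restrict (Set.Ioi 0))) := by
    rw [integrable_prod_iff' (by
      apply Measurable.aestronglyMeasurable
      fun_prop)]
    constructor
    · filter_upwards [ae_restrict_mem measurableSet_Ioi] with t ht
      exact (key t ht).1
    · refine hi.congr ?_
      filter_upwards [ae_restrict_mem measurableSet_Ioi] with t ht
      rw [← (key t ht).2]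
      congr 1
      funext y
      rw [Real.norm_of_nonneg]
      exact mul_nonneg (hc t ht) (Real.exp_pos _).le
  refine ⟨hI, ?_⟩
  rw [integral_integral_swap hI]
  refine setIntegral_congr_fun measurableSet_Ioi ?_
  intro t ht
  exact (key t ht).2

lemma aux_exp0 : Integrable (fun t : ℝ => Real.exp (-t / (4 * π))) (volume.restrict (Set.Ioi 0)) ∧
    ∫ t in Set.Ioi (0 : ℝ), Real.exp (-t / (4 * π)) = 4 * π := by
  have h := integral_rpow_mul_exp_neg_mul_Ioi (a := 1) (r := 1 / (4 * π)) one_pos (by positivity)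
  have e : ∫ t in Set.Ioi (0 : ℝ), Real.exp (-t / (4 * π)) = 4 * π := by
    simp at h
    refine Eq.trans ?_ h
    congr 1; funext t; congr 1; ring
  exact ⟨Integrable.of_integral_ne_zero (by rw [e]; positivity), e⟩

lemma aux_exp1 :
    Integrable (fun t : ℝ => t * Real.exp (-t / (4 * π))) (volume.restrict (Set.Ioi 0)) ∧
    ∫ t in Set.Ioi (0 : ℝ), t * Real.exp (-t / (4 * π)) = 16 * π ^ 2 := by
  have h := integral_rpow_mul_exp_neg_mul_Ioi (a := 2) (r := 1 / (4 * π)) two_pos (by positivity)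
  have e : ∫ t in Set.Ioi (0 : ℝ), t * Real.exp (-t / (4 * π)) = 16 * π ^ 2 := by
    have h2 : (1 / (1 / (4 * π))) ^ (2 : ℝ) * Gamma 2 = 16 * π ^ 2 := by
      rw [Real.Gamma_two, Real.rpow_two]; field_simp; norm_num
    rw [← h2, ← h]
    refine setIntegral_congr_fun measurableSet_Ioi ?_
    intro t ht
    norm_num
    left; ring
  exact ⟨Integrable.of_integral_ne_zero (by rw [e]; positivity), e⟩

lemma aux_G_nonneg {α : ℝ} (hα : 0 < α) (y : ℝ × ℝ) : 0 ≤ besselG α y := by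
  unfold besselG
  refine mul_nonneg (by positivity) (setIntegral_nonneg measurableSet_Ioi ?_)
  intro t ht
  have : 0 < t := ht
  positivity

lemma aux_G_int {α : ℝ} (hα : 0 < α) :
    Integrable (besselG α) ∧ ∫ y, besselG α y = 1 := by
  have hc : (fun t : ℝ => α * Real.exp (-t / (4 * π))) =ᵐ[volume.restrict (Set.Ioi 0)]
      (fun t => (1 / t * Real.exp (-t / (4 * π))) * (t * α)) := by
    filter_upwards [ae_restrict_mem measurableSet_Ioi] with t ht
    have : (0 : ℝ) < t := ht
    field_simp
  have h := aux_fub (fun t => 1 / t * Real.exp (-t / (4 * π))) (by fun_prop)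
    (fun t ht => by positivity) hα ((aux_exp0.1.const_mul α).congr hc)
  have e : besselG α = fun y => (1 / (4 * π * α)) * ∫ t in Set.Ioi (0 : ℝ),
      (1 / t * Real.exp (-t / (4 * π))) * Real.exp (-(π * (y.1 ^ 2 + y.2 ^ 2)) / (t * α)) := by
    funext y
    unfold besselG
    congr 2
    funext t
    ring
  rw [e]
  refine ⟨h.1.integral_prod_left.const_mul _, ?_⟩
  rw [integral_const_mul, h.2, ← integral_congr_ae hc, integral_const_mul, aux_exp0.2]
  field_simp

lemma aux_G_bdd {α : ℝ} (hα : 0 < α) (y : ℝ × ℝ) :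
    (y.1 ^ 2 + y.2 ^ 2) * besselG α y ≤ 1 / π := by
  unfold besselG
  rw [mul_left_comm, ← integral_const_mul]
  have h : ∫ t in Set.Ioi (0 : ℝ), (y.1 ^ 2 + y.2 ^ 2) *
      ((1 / t) * Real.exp (-(π * (y.1 ^ 2 + y.2 ^ 2)) / (t * α)) * Real.exp (-t / (4 * π))) ≤
      ∫ t in Set.Ioi (0 : ℝ), (α / π) * Real.exp (-t / (4 * π)) := by
    apply integral_mono_of_nonneg
    · filter_upwards [ae_restrict_mem measurableSet_Ioi] with t ht
      have : (0 : ℝ) < t := ht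
      simp only [Pi.zero_apply]
      positivity
    · exact aux_exp0.1.const_mul _
    · filter_upwards [ae_restrict_mem measurableSet_Ioi] with t ht
      have ht' : (0 : ℝ) < t := ht
      rw [← mul_assoc]
      refine mul_le_mul_of_nonneg_right ?_ (Real.exp_pos _).le
      set u := π * (y.1 ^ 2 + y.2 ^ 2) / (t * α) with hu
      have e1 : -(π * (y.1 ^ 2 + y.2 ^ 2)) / (t * α) = -u := by rw [hu]; ring
      have e2 : (y.1 ^ 2 + y.2 ^ 2) * (1 / t * Real.exp (-u)) = (α / π) * (u * Real.exp (-u)) := by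
        rw [hu]; field_simp
      rw [e1, e2]
      have : u * Real.exp (-u) ≤ 1 := by
        rw [Real.exp_neg, ← div_eq_mul_inv, div_le_one (Real.exp_pos _)]
        linarith [Real.add_one_le_exp u]
      have h0 : 0 ≤ α / π := by positivity
      nlinarith
  rw [integral_const_mul _ (fun t : ℝ => Real.exp (-t / (4 * π))), aux_exp0.2] at h
  calc _ ≤ 1 / (4 * π * α) * (α / π * (4 * π)) := by
        apply mul_le_mul_of_nonneg_left h; positivity
    _ = 1 / π := by field_simp

lemma aux_G_mom {α : ℝ} (hα : 0 < α) :
    Integrable (fun y : ℝ × ℝ => (y.1 ^ 2 + y.2 ^ 2) * besselG α y) ∧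
      ∫ y : ℝ × ℝ, (y.1 ^ 2 + y.2 ^ 2) * besselG α y ≤ 16 * α := by
  have hc : (fun t : ℝ => (4 * α ^ 2 / π) * (t * Real.exp (-t / (4 * π)))) =
      (fun t => ((2 * α / π) * Real.exp (-t / (4 * π))) * (t * (2 * α))) := by
    funext t; ring
  have h := aux_fub (fun t => (2 * α / π) * Real.exp (-t / (4 * π))) (by fun_prop)
    (fun t ht => by positivity) (by positivity : 0 < 2 * α)
    (by rw [← hc]; exact aux_exp1.1.const_mul _)
  have hle : ∀ᵐ y : ℝ × ℝ, (y.1 ^ 2 + y.2 ^ 2) * besselG α y ≤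
      (1 / (4 * π * α)) * ∫ t in Set.Ioi (0 : ℝ), ((2 * α / π) * Real.exp (-t / (4 * π))) *
        Real.exp (-(π * (y.1 ^ 2 + y.2 ^ 2)) / (t * (2 * α))) := by
    filter_upwards [h.1.prod_right_ae] with y hy
    unfold besselG
    rw [mul_left_comm, ← integral_const_mul]
    refine mul_le_mul_of_nonneg_left ?_ (by positivity)
    apply integral_mono_of_nonneg
    · filter_upwards [ae_restrict_mem measurableSet_Ioi] with t ht
      have : (0 : ℝ) < t := ht
      simp only [Pi.zero_apply]
      positivity
    · exact hy
    · filter_upwards [ae_restrict_mem measurableSet_Ioi] with t ht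
      have ht' : (0 : ℝ) < t := ht
      set u := π * (y.1 ^ 2 + y.2 ^ 2) / (t * (2 * α)) with hu
      have e0 : -(π * (y.1 ^ 2 + y.2 ^ 2)) / (t * (2 * α)) = -u := by rw [hu]; ring
      have e1 : -(π * (y.1 ^ 2 + y.2 ^ 2)) / (t * α) = -u + -u := by rw [hu]; field_simp; ring
      have e2 : (y.1 ^ 2 + y.2 ^ 2) * (1 / t * Real.exp (-u + -u) * Real.exp (-t / (4 * π))) =
          (2 * α / π) * Real.exp (-t / (4 * π)) * ((u * Real.exp (-u)) * Real.exp (-u)) := by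
        rw [Real.exp_add]
        have : y.1 ^ 2 + y.2 ^ 2 = u * t * 2 * α / π := by rw [hu]; field_simp
        rw [this]; field_simp
      rw [e0, e1, e2]
      refine mul_le_mul_of_nonneg_left ?_ (by positivity)
      have : u * Real.exp (-u) ≤ 1 := by
        rw [Real.exp_neg, ← div_eq_mul_inv, div_le_one (Real.exp_pos _)]
        linarith [Real.add_one_le_exp u]
      have h0 := Real.exp_pos (-u)
      nlinarith
  have hInt := h.1.integral_prod_left.const_mul (1 / (4 * π * α))
  have hnn : ∀ y : ℝ × ℝ, 0 ≤ (y.1 ^ 2 + y.2 ^ 2) * besselG α y := fun y =>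
    mul_nonneg (by positivity) (aux_G_nonneg hα y)
  constructor
  · refine hInt.mono' ?_ ?_
    · refine AEStronglyMeasurable.mul ?_ (aux_G_int hα).1.aestronglyMeasurable
      exact (by fun_prop : Measurable fun y : ℝ × ℝ => y.1 ^ 2 + y.2 ^ 2).aestronglyMeasurable
    · filter_upwards [hle] with y hy
      rw [Real.norm_of_nonneg (hnn y)]
      exact hy
  · refine (integral_mono_of_nonneg (Filter.Eventually.of_forall hnn) hInt hle).trans ?_
    rw [integral_const_mul, h.2, ← hc, integral_const_mul, aux_exp1.2]
    apply le_of_eq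
    field_simp
    try norm_num

noncomputable def auxk (r : ℝ) (z : ℝ × ℝ) : ℝ :=
  if √(z.1 ^ 2 + z.2 ^ 2) < r then (√(z.1 ^ 2 + z.2 ^ 2))⁻¹ else 0

lemma auxk_nonneg (r : ℝ) (z : ℝ × ℝ) : 0 ≤ auxk r z := by
  unfold auxk; split_ifs <;> positivity

lemma auxk_int {r : ℝ} (hr : 0 < r) :
    Integrable (auxk r) ∧ ∫ z, auxk r z ≤ 2 * π * r := by
  have hl : ∫⁻ z, ENNReal.ofReal (auxk r z) ≤ ENNReal.ofReal (2 * π * r) := by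
    rw [← lintegral_comp_polarCoord_symm]
    have hE : MeasurableSet (Set.Ioo (0 : ℝ) r ×ˢ Set.Ioo (-π) π) :=
      measurableSet_Ioo.prod measurableSet_Ioo
    calc _ ≤ ∫⁻ p in polarCoord.target,
          (Set.Ioo (0 : ℝ) r ×ˢ Set.Ioo (-π) π).indicator 1 p := by
          refine setLIntegral_mono' polarCoord.open_target.measurableSet ?_
          intro p hp
          have hp1 : 0 < p.1 := hp.1
          have e : √((polarCoord.symm p).1 ^ 2 + (polarCoord.symm p).2 ^ 2) = p.1 := by
            have : (polarCoord.symm p).1 ^ 2 + (polarCoord.symm p).2 ^ 2 = p.1 ^ 2 := by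
              simp only [polarCoord_symm_apply]
              nlinarith [Real.sin_sq_add_cos_sq p.2]
            rw [this, Real.sqrt_sq hp1.le]
          unfold auxk
          rw [e]
          split_ifs with h
          · rw [Set.indicator_of_mem (show p ∈ Set.Ioo (0 : ℝ) r ×ˢ Set.Ioo (-π) π from ⟨⟨hp1, h⟩, hp.2⟩), smul_eq_mul,
              ← ENNReal.ofReal_mul hp1.le, mul_inv_cancel₀ hp1.ne']
            simp
          · simp
      _ ≤ ∫⁻ p, (Set.Ioo (0 : ℝ) r ×ˢ Set.Ioo (-π) π).indicator 1 p := setLIntegral_le_lintegral _ _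
      _ = ENNReal.ofReal (2 * π * r) := by
          rw [lintegral_indicator_one hE, Measure.volume_eq_prod, Measure.prod_prod,
            Real.volume_Ioo, Real.volume_Ioo, ← ENNReal.ofReal_mul (by linarith)]
          congr 1; ring
  have hm : Measurable (auxk r) := by
    unfold auxk
    refine Measurable.ite ?_ (by fun_prop) measurable_const
    exact measurableSet_lt (by fun_prop) measurable_const
  have hI : Integrable (auxk r) := by
    refine ⟨hm.aestronglyMeasurable, ?_⟩
    rw [hasFiniteIntegral_iff_ofReal (Filter.Eventually.of_forall (auxk_nonneg r))]
    exact hl.trans_lt ENNReal.ofReal_lt_top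
  refine ⟨hI, ?_⟩
  rw [← ofReal_integral_eq_lintegral_ofReal hI (Filter.Eventually.of_forall (auxk_nonneg r))] at hl
  exact (ENNReal.ofReal_le_ofReal_iff (by positivity)).1 hl

lemma aux_alg (a b c d : ℝ) (h1 : 0 < a ^ 2 + b ^ 2) (h2 : 0 < c ^ 2 + d ^ 2) :
    (a / (2 * π * (a ^ 2 + b ^ 2)) - c / (2 * π * (c ^ 2 + d ^ 2))) ^ 2 ≤
      (√((a - c) ^ 2 + (b - d) ^ 2) / (2 * π * (√(a ^ 2 + b ^ 2) * √(c ^ 2 + d ^ 2)))) ^ 2 := by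
  have e : (√((a - c) ^ 2 + (b - d) ^ 2) /
      (2 * π * (√(a ^ 2 + b ^ 2) * √(c ^ 2 + d ^ 2)))) ^ 2 =
      (a / (2 * π * (a ^ 2 + b ^ 2)) - c / (2 * π * (c ^ 2 + d ^ 2))) ^ 2 +
      (b / (2 * π * (a ^ 2 + b ^ 2)) - d / (2 * π * (c ^ 2 + d ^ 2))) ^ 2 := by
    rw [div_pow, mul_pow, mul_pow (√_) (√_) 2, Real.sq_sqrt (by positivity), Real.sq_sqrt h1.le,
      Real.sq_sqrt h2.le]
    field_simp
    ring
  rw [e]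
  nlinarith [sq_nonneg (b / (2 * π * (a ^ 2 + b ^ 2)) - d / (2 * π * (c ^ 2 + d ^ 2)))]

lemma aux_pt (a b c d : ℝ) (h1 : 0 < a ^ 2 + b ^ 2) (h2 : 0 < c ^ 2 + d ^ 2) {r : ℝ} (hr : 0 < r)
    {G : ℝ} (hG : 0 ≤ G) (hG2 : ((c - a) ^ 2 + (d - b) ^ 2) * G ≤ 1 / π) {D : ℝ}
    (hD : D ^ 2 ≤ 
      (√((c - a) ^ 2 + (d - b) ^ 2) / (2 * π * (√(a ^ 2 + b ^ 2) * √(c ^ 2 + d ^ 2)))) ^ 2) :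
    |D * G| ≤ 1 / (2 * π * (c ^ 2 + d ^ 2)) *
      (r * G + 2 / r * (((c - a) ^ 2 + (d - b) ^ 2) * G) + 1 / π * auxk r (a, b)) := by
  set m := √((c - a) ^ 2 + (d - b) ^ 2) with hm
  have hm2 : (c - a) ^ 2 + (d - b) ^ 2 = m ^ 2 := (Real.sq_sqrt (by positivity)).symm
  have hm0 : 0 ≤ m := Real.sqrt_nonneg _
  set z := √(a ^ 2 + b ^ 2) with hz
  have hz0 : 0 < z := Real.sqrt_pos.2 h1
  set x := √(c ^ 2 + d ^ 2) with hx
  have hx0 : 0 < x := Real.sqrt_pos.2 h2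
  have hx2 : c ^ 2 + d ^ 2 = x ^ 2 := (Real.sq_sqrt (by positivity)).symm
  have hz2 : a ^ 2 + b ^ 2 = z ^ 2 := (Real.sq_sqrt (by positivity)).symm
  have tri : x ≤ z + m := by
    have hcs : a * (c - a) + b * (d - b) ≤ z * m := by
      apply le_of_sq_le_sq _ (by positivity)
      rw [mul_pow, ← hm2, ← hz2]
      nlinarith [sq_nonneg (a * (d - b) - b * (c - a))]
    apply le_of_sq_le_sq _ (by positivity)
    nlinarith
  have hDa : |D| ≤ m / (2 * π * (z * x)) := abs_le_of_sq_le_sq hD (by positivity)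
  rw [abs_mul, abs_of_nonneg hG, hm2, hx2]
  rw [hm2] at hG2
  have hk : m ^ 2 * G / z ≤ 1 / r * (m ^ 2 * G) + 1 / π * auxk r (a, b) := by
    unfold auxk
    simp only
    rw [← hz]
    have : 0 ≤ m ^ 2 * G := by positivity
    split_ifs with h
    · have h3 : m ^ 2 * G / z ≤ 1 / π * z⁻¹ := by
        rw [div_eq_mul_inv]; exact mul_le_mul_of_nonneg_right hG2 (by positivity)
      have : 0 ≤ 1 / r * (m ^ 2 * G) := by positivity
      linarith
    · push Not at h
      have : m ^ 2 * G / z ≤ m ^ 2 * G / r := div_le_div_of_nonneg_left this hr h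
      calc _ ≤ _ := this
        _ = _ := by ring
  have h4 : m * G ≤ r * G + 1 / r * (m ^ 2 * G) := by
    have : m ≤ r + 1 / r * m ^ 2 := by
      have : r + 1 / r * m ^ 2 - m = ((m - r / 2) ^ 2 + 3 / 4 * r ^ 2) / r := by field_simp; ring
      have : 0 ≤ ((m - r / 2) ^ 2 + 3 / 4 * r ^ 2) / r := by positivity
      linarith
    nlinarith
  calc |D| * G ≤ m / (2 * π * (z * x)) * G := mul_le_mul_of_nonneg_right hDa hG
    _ = 1 / (2 * π * x ^ 2) * (x * (m * G / z)) := by field_simp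
    _ ≤ 1 / (2 * π * x ^ 2) * ((z + m) * (m * G / z)) := by gcongr
    _ = 1 / (2 * π * x ^ 2) * (m * G + m ^ 2 * G / z) := by field_simp
    _ ≤ _ := by
      apply mul_le_mul_of_nonneg_left _ (by positivity)
      have : 2 / r * (m ^ 2 * G) = 1 / r * (m ^ 2 * G) + 1 / r * (m ^ 2 * G) := by ring
      linarith

lemma aux_comp {α : ℝ} (hα : 0 < α) (x : ℝ × ℝ) (hx : 0 < x.1 ^ 2 + x.2 ^ 2)
    (k : ℝ × ℝ → ℝ) (hk : Measurable k)
    (hd : ∀ z : ℝ × ℝ, 0 < z.1 ^ 2 + z.2 ^ 2 → (k z - k x) ^ 2 ≤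
      (√((x.1 - z.1) ^ 2 + (x.2 - z.2) ^ 2) /
        (2 * π * (√(z.1 ^ 2 + z.2 ^ 2) * √(x.1 ^ 2 + x.2 ^ 2)))) ^ 2) :
    |(∫ y : ℝ × ℝ, k (x.1 - y.1, x.2 - y.2) * besselG α y) - k x| ≤
      35 * √α / (x.1 ^ 2 + x.2 ^ 2) := by
  have hr : 0 < √α := Real.sqrt_pos.2 hα
  obtain ⟨hG, hG1⟩ := aux_G_int hα
  obtain ⟨hM, hM1⟩ := aux_G_mom hα
  obtain ⟨hK, hK1⟩ := auxk_int hr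
  have hK' := hK.comp_sub_left x
  have hKe := integral_sub_left_eq_self (auxk √α) volume x
  set B : ℝ × ℝ → ℝ := fun y => 1 / (2 * π * (x.1 ^ 2 + x.2 ^ 2)) *
      (√α * besselG α y + 2 / √α * ((y.1 ^ 2 + y.2 ^ 2) * besselG α y) +
        1 / π * auxk √α (x - y)) with hB
  have hBi : Integrable B :=
    (((hG.const_mul _).add (hM.const_mul _)).add (hK'.const_mul _)).const_mul _
  have hBv : ∫ y, B y ≤ 35 * √α / (x.1 ^ 2 + x.2 ^ 2) := by
    have e : ∫ y, B y = 1 / (2 * π * (x.1 ^ 2 + x.2 ^ 2)) *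
      (√α * 1 + 2 / √α * (∫ y : ℝ × ℝ, (y.1 ^ 2 + y.2 ^ 2) * besselG α y) +
        1 / π * ∫ z, auxk √α z) := by
      rw [hB, integral_const_mul, integral_add, integral_add, integral_const_mul,
        integral_const_mul, integral_const_mul, hKe, hG1]
      · exact hG.const_mul _
      · exact hM.const_mul _
      · exact (hG.const_mul _).add (hM.const_mul _)
      · exact hK'.const_mul _
    rw [e]
    have hs : α = √α * √α := (Real.mul_self_sqrt hα.le).symm
    have h1 : 2 / √α * (∫ y : ℝ × ℝ, (y.1 ^ 2 + y.2 ^ 2) * besselG α y) ≤ 32 * √α := by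
      calc _ ≤ 2 / √α * (16 * α) := mul_le_mul_of_nonneg_left hM1 (by positivity)
        _ = 2 / √α * (16 * (√α * √α)) := by rw [← hs]
        _ = 32 * √α := by field_simp; norm_num
    have h2 : 1 / π * ∫ z, auxk √α z ≤ 2 * √α := by
      calc _ ≤ 1 / π * (2 * π * √α) := mul_le_mul_of_nonneg_left hK1 (by positivity)
        _ = _ := by field_simp
    calc _ ≤ 1 / (2 * π * (x.1 ^ 2 + x.2 ^ 2)) * (35 * √α) := by
          apply mul_le_mul_of_nonneg_left _ (by positivity)
          linarith
      _ ≤ 1 / (1 * (x.1 ^ 2 + x.2 ^ 2)) * (35 * √α) := by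
          gcongr
          linarith [Real.pi_gt_three]
      _ = _ := by rw [one_mul]; ring
  have hpt : ∀ᵐ y : ℝ × ℝ,
      ‖(k (x.1 - y.1, x.2 - y.2) - k x) * besselG α y‖ ≤ B y := by
    have : ∀ᵐ y : ℝ × ℝ, y ≠ x := by
      simp [ae_iff]
    filter_upwards [this] with y hy
    have hz : 0 < (x.1 - y.1) ^ 2 + (x.2 - y.2) ^ 2 := by
      by_contra hcon
      push Not at hcon
      apply hy
      have e1 : (x.1 - y.1) = 0 := by nlinarith [sq_nonneg (x.1 - y.1), sq_nonneg (x.2 - y.2)]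
      have e2 : (x.2 - y.2) = 0 := by nlinarith [sq_nonneg (x.1 - y.1), sq_nonneg (x.2 - y.2)]
      ext <;> linarith
    have hb := aux_G_bdd hα y
    have := aux_pt (x.1 - y.1) (x.2 - y.2) x.1 x.2 hz hx hr (aux_G_nonneg hα y)
      (by simpa using hb) (hd (x.1 - y.1, x.2 - y.2) hz)
    rw [Real.norm_eq_abs]
    have exy : x - y = (x.1 - y.1, x.2 - y.2) := rfl
    simpa [hB, exy] using this
  have hDi : Integrable (fun y : ℝ × ℝ => (k (x.1 - y.1, x.2 - y.2) - k x) * besselG α y) := by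
    refine hBi.mono' ?_ hpt
    refine AEStronglyMeasurable.mul ?_ hG.aestronglyMeasurable
    exact (by fun_prop :
      Measurable fun y : ℝ × ℝ => k (x.1 - y.1, x.2 - y.2) - k x).aestronglyMeasurable
  have e : (∫ y : ℝ × ℝ, k (x.1 - y.1, x.2 - y.2) * besselG α y) - k x =
      ∫ y : ℝ × ℝ, (k (x.1 - y.1, x.2 - y.2) - k x) * besselG α y := by
    have : ∀ y : ℝ × ℝ, k (x.1 - y.1, x.2 - y.2) * besselG α y =
      (k (x.1 - y.1, x.2 - y.2) - k x) * besselG α y + k x * besselG α y := by intro y; ring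
    simp_rw [this]
    rw [integral_add hDi (hG.const_mul _), integral_const_mul, hG1]
    ring
  rw [e, ← Real.norm_eq_abs]
  exact (norm_integral_le_of_norm_le hBi hpt).trans hBv

/-- `|K_α(x) - K(x)| ≤ C √α / |x|²` for all `x ≠ 0`, `α > 0`. -/
theorem stmt_13 :
    ∃ C > 0, ∀ (α : ℝ), 0 < α → ∀ x : ℝ × ℝ, x ≠ 0 →
      Real.sqrt (((BSKα α x).1 - (BSK x).1) ^ 2 + ((BSKα α x).2 - (BSK x).2) ^ 2)
        ≤ C * Real.sqrt α / (x.1 ^ 2 + x.2 ^ 2) := by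
  refine ⟨70, by norm_num, ?_⟩
  intro α hα x hx
  have hx' : 0 < x.1 ^ 2 + x.2 ^ 2 := by
    by_contra hcon
    push Not at hcon
    apply hx
    have e1 : x.1 = 0 := by nlinarith [sq_nonneg x.1, sq_nonneg x.2]
    have e2 : x.2 = 0 := by nlinarith [sq_nonneg x.1, sq_nonneg x.2]
    ext <;> simp [e1, e2]
  have h1 := aux_comp hα x hx' (fun z => (BSK z).1) (by unfold BSK; fun_prop) (by
    intro z hz
    have := aux_alg z.2 z.1 x.2 x.1 (by linarith) (by linarith)
    simp only [BSK]
    convert this using 1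
    · rw [add_comm (z.2 ^ 2), add_comm (x.2 ^ 2)]; ring
    · rw [add_comm (z.2 ^ 2), add_comm (x.2 ^ 2)]
      congr 3; ring)
  have h2 := aux_comp hα x hx' (fun z => (BSK z).2) (by unfold BSK; fun_prop) (by
    intro z hz
    have := aux_alg z.1 z.2 x.1 x.2 hz hx'
    simp only [BSK]
    convert this using 1
    congr 3; ring)
  change |(BSKα α x).1 - (BSK x).1| ≤ _ at h1
  change |(BSKα α x).2 - (BSK x).2| ≤ _ at h2
  set p := (BSKα α x).1 - (BSK x).1
  set q := (BSKα α x).2 - (BSK x).2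
  have h3 : √(p ^ 2 + q ^ 2) ≤ |p| + |q| := by
    apply Real.sqrt_le_iff.2
    refine ⟨by positivity, ?_⟩
    nlinarith [sq_abs p, sq_abs q, abs_nonneg p, abs_nonneg q,
      mul_nonneg (abs_nonneg p) (abs_nonneg q)]
  have h4 : 70 * √α / (x.1 ^ 2 + x.2 ^ 2) =
    35 * √α / (x.1 ^ 2 + x.2 ^ 2) + 35 * √α / (x.1 ^ 2 + x.2 ^ 2) := by ring
  rw [h4]
  linarith
end

section
/- For every $\alpha > 0$ and $y_2 > 0$, $\int_{\mathbb{R}} \partial_2 H_\alpha(x_1, y_2)\,dx_1 = \frac{1}{2} - \frac{1}{2}e^{-y_2/\sqrt{\alpha}}$. -/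
open MeasureTheory Real

/-- `∂₂ Gα`, the partial derivative of `Gα` in the second variable. -/
noncomputable def d2G (α : ℝ) (x : ℝ × ℝ) : ℝ :=
  deriv (fun y => besselG α (x.1, y)) x.2

/-- `Hα = α Gα + (1/2π) ln|·|`. -/
noncomputable def Hfun (α : ℝ) (x : ℝ × ℝ) : ℝ :=
  α * besselG α x + (1 / (2 * π)) * Real.log (Real.sqrt (x.1 ^ 2 + x.2 ^ 2))

/-- `∂₂ Hα`. -/
noncomputable def d2H (α : ℝ) (x : ℝ × ℝ) : ℝ :=
  deriv (fun y => Hfun α (x.1, y)) x.2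

open Filter Topology Set

noncomputable def erfE (u : ℝ) : ℝ := ∫ v in (0:ℝ)..u, Real.exp (-1 * v ^ 2)

lemma erfE_deriv (u : ℝ) : HasDerivAt erfE (Real.exp (-1 * u ^ 2)) u := by
  have hc : Continuous fun v : ℝ => Real.exp (-1 * v ^ 2) := by fun_prop
  exact intervalIntegral.integral_hasDerivAt_right (hc.intervalIntegrable _ _)
    (hc.stronglyMeasurableAtFilter _ _) hc.continuousAt

lemma erfE_top : Tendsto erfE atTop (𝓝 (√π / 2)) := by
  have h := intervalIntegral_tendsto_integral_Ioi (f := fun v : ℝ => Real.exp (-1 * v ^ 2)) (μ := volume)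
    (l := atTop) (b := id) 0 (integrable_exp_neg_mul_sq one_pos).integrableOn tendsto_id
  rw [integral_gaussian_Ioi, div_one] at h
  exact h

lemma erfE_neg (u : ℝ) : erfE (-u) = - erfE u := by
  unfold erfE
  have := intervalIntegral.integral_comp_neg (a := 0) (b := u) (fun v : ℝ => Real.exp (-1 * v ^ 2))
  simp only [neg_sq, neg_zero] at this
  rw [this, intervalIntegral.integral_symm]

lemma erfE_bot : Tendsto erfE atBot (𝓝 (-(√π / 2))) := by
  have h := (erfE_top.comp tendsto_neg_atBot_atTop).neg
  refine h.congr fun u => ?_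
  simp [erfE_neg]

noncomputable def prim (A B t : ℝ) : ℝ :=
  Real.exp (2 * A * B) * erfE (A / √t + B * √t) + Real.exp (-(2 * A * B)) * erfE (A / √t - B * √t)

lemma prim_deriv (A B t : ℝ) (ht : 0 < t) :
    HasDerivAt (prim A B) (-A * (1 / (t * √t) * Real.exp (-(A ^ 2 / t + B ^ 2 * t)))) t := by
  have hs : HasDerivAt (fun t => √t) (1 / (2 * √t)) t := Real.hasDerivAt_sqrt ht.ne'
  have hst : 0 < √t := Real.sqrt_pos.2 ht
  have h1 : HasDerivAt (fun t => A / √t) (-A * (1 / (2 * √t)) / (√t) ^ 2) t := by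
    have := (hasDerivAt_const t A).div hs hst.ne'
    refine this.congr_deriv ?_
    simp
  have h2 := hs.const_mul B
  have h3 := ((erfE_deriv _).comp t (h1.add h2)).const_mul (Real.exp (2 * A * B))
  have h4 := ((erfE_deriv _).comp t (h1.sub h2)).const_mul (Real.exp (-(2 * A * B)))
  have h5 := h3.add h4
  refine h5.congr_deriv ?_
  have hsq : √t ^ 2 = t := Real.sq_sqrt ht.le
  have e1 : Real.exp (2 * A * B) * Real.exp (-1 * (A / √t + B * √t) ^ 2)
      = Real.exp (-(A ^ 2 / t + B ^ 2 * t)) := by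
    rw [← Real.exp_add]; congr 1
    nth_rewrite 3 4 [← hsq]
    field_simp; ring
  have e2 : Real.exp (-(2 * A * B)) * Real.exp (-1 * (A / √t - B * √t) ^ 2)
      = Real.exp (-(A ^ 2 / t + B ^ 2 * t)) := by
    rw [← Real.exp_add]; congr 1
    nth_rewrite 3 4 [← hsq]
    field_simp; ring
  simp only [Pi.add_apply, Pi.sub_apply]
  rw [← mul_assoc, ← mul_assoc, e1, e2, hsq]
  field_simp
  ring

lemma prim_zero (A B : ℝ) (hA : 0 < A) :
    Tendsto (prim A B) (𝓝[>] 0) (𝓝 (Real.exp (2 * A * B) * (√π / 2) + Real.exp (-(2 * A * B)) * (√π / 2))) := by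
  have hs : Tendsto (fun t : ℝ => √t) (𝓝[>] 0) (𝓝[>] 0) := by
    refine tendsto_nhdsWithin_iff.2 ⟨?_, ?_⟩
    · have := (Real.continuous_sqrt.tendsto 0)
      rw [Real.sqrt_zero] at this
      exact this.mono_left nhdsWithin_le_nhds
    · filter_upwards [self_mem_nhdsWithin] with t ht using Real.sqrt_pos.2 ht
  have h1 : Tendsto (fun t : ℝ => A / √t) (𝓝[>] 0) atTop := by
    simp only [div_eq_mul_inv]
    exact (tendsto_inv_nhdsGT_zero.comp hs).const_mul_atTop hA
  have h2 : Tendsto (fun t : ℝ => B * √t) (𝓝[>] 0) (𝓝 (B * 0)) :=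
    (hs.mono_right nhdsWithin_le_nhds).const_mul B
  exact ((erfE_top.comp (h1.atTop_add h2)).const_mul _).add
    ((erfE_top.comp (by simpa [sub_eq_add_neg] using h1.atTop_add h2.neg)).const_mul _)

lemma prim_top (A B : ℝ) (hB : 0 < B) :
    Tendsto (prim A B) atTop (𝓝 (Real.exp (2 * A * B) * (√π / 2) + Real.exp (-(2 * A * B)) * (-(√π / 2)))) := by
  have h1 : Tendsto (fun t : ℝ => A / √t) atTop (𝓝 0) :=
    Real.tendsto_sqrt_atTop.const_div_atTop A
  have h2 : Tendsto (fun t : ℝ => B * √t) atTop atTop :=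
    Real.tendsto_sqrt_atTop.const_mul_atTop hB
  exact ((erfE_top.comp (h1.add_atTop h2)).const_mul _).add
    ((erfE_bot.comp (by simpa [sub_eq_add_neg] using h1.add_atBot (tendsto_neg_atTop_atBot.comp h2))).const_mul _)

lemma glasser (A B : ℝ) (hA : 0 < A) (hB : 0 < B) :
    IntegrableOn (fun t : ℝ => 1 / (t * √t) * Real.exp (-(A ^ 2 / t + B ^ 2 * t))) (Ioi 0) ∧
    ∫ t in Ioi (0:ℝ), 1 / (t * √t) * Real.exp (-(A ^ 2 / t + B ^ 2 * t))
      = √π / A * Real.exp (-(2 * A * B)) := by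
  set L := Real.exp (2 * A * B) * (√π / 2) + Real.exp (-(2 * A * B)) * (√π / 2) with hL
  have hc : ContinuousWithinAt (Function.update (prim A B) 0 L) (Ici 0) 0 := by
    rw [continuousWithinAt_update_same, Ici_sdiff_left]
    exact prim_zero A B hA
  have hd : ∀ t ∈ Ioi (0:ℝ), HasDerivAt (Function.update (prim A B) 0 L)
      (-A * (1 / (t * √t) * Real.exp (-(A ^ 2 / t + B ^ 2 * t)))) t := by
    intro t ht
    refine (prim_deriv A B t ht).congr_of_eventuallyEq ?_
    filter_upwards [lt_mem_nhds (show (0:ℝ) < t from ht)] with s hs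
    rw [Function.update_of_ne hs.ne']
  have hn : ∀ t ∈ Ioi (0:ℝ), (-A * (1 / (t * √t) * Real.exp (-(A ^ 2 / t + B ^ 2 * t)))) ≤ 0 := by
    intro t ht
    have : (0:ℝ) < t := ht
    have : 0 ≤ A * (1 / (t * √t) * Real.exp (-(A ^ 2 / t + B ^ 2 * t))) := by positivity
    linarith
  have ht : Tendsto (Function.update (prim A B) 0 L) atTop _ := (prim_top A B hB).congr' (by
    filter_upwards [eventually_gt_atTop 0] with s hs
    rw [Function.update_of_ne hs.ne'])
  have hi := integrableOn_Ioi_deriv_of_nonpos hc hd hn ht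
  have hv := integral_Ioi_of_hasDerivAt_of_nonpos hc hd hn ht
  rw [integral_const_mul, Function.update_self] at hv
  constructor
  · have := hi.const_mul (-A)⁻¹
    refine this.congr (Eventually.of_forall fun t => ?_)
    have : A ≠ 0 := hA.ne'
    simp only
    field_simp
  · rw [hL] at hv
    rw [div_mul_eq_mul_div, eq_div_iff hA.ne']
    linarith

lemma kern_bound (c t : ℝ) (hc : 0 < c) (ht : 0 < t) : 1 / t ^ 2 * Real.exp (-(c / t)) ≤ 2 / c ^ 2 := by
  have h := Real.pow_div_factorial_le_exp (x := c / t) (by positivity) 2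
  rw [Real.exp_neg, ← one_div]
  have hp : 0 < (c / t) ^ 2 / (Nat.factorial 2 : ℝ) := by positivity
  have := one_div_le_one_div_of_le hp h
  calc _ ≤ 1 / t ^ 2 * (1 / ((c / t) ^ 2 / (Nat.factorial 2 : ℝ))) := by gcongr
    _ = _ := by simp [Nat.factorial]; field_simp

lemma kern_bound1 (c t : ℝ) (hc : 0 < c) (ht : 0 < t) : 1 / t * Real.exp (-(c / t)) ≤ 1 / c := by
  have h := Real.pow_div_factorial_le_exp (x := c / t) (by positivity) 1
  rw [Real.exp_neg, ← one_div]
  have hp : 0 < (c / t) ^ 1 / (Nat.factorial 1 : ℝ) := by positivity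
  have := one_div_le_one_div_of_le hp h
  calc _ ≤ 1 / t * (1 / ((c / t) ^ 1 / (Nat.factorial 1 : ℝ))) := by gcongr
    _ = _ := by simp [Nat.factorial]; field_simp

lemma exp_int : IntegrableOn (fun t : ℝ => Real.exp (-t / (4 * π))) (Ioi 0) := by
  have := exp_neg_integrableOn_Ioi 0 (b := 1 / (4 * π)) (by positivity)
  refine this.congr (Eventually.of_forall fun t => ?_)
  simp only; congr 1; ring

noncomputable def dk (α y x t : ℝ) : ℝ :=
  1 / t ^ 2 * Real.exp (-(π * (x ^ 2 + y ^ 2)) / (t * α)) * Real.exp (-t / (4 * π))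

lemma dk_meas (α y : ℝ) : Measurable (fun p : ℝ × ℝ => dk α y p.1 p.2) := by
  unfold dk; fun_prop

lemma bessel_deriv (α : ℝ) (hα : 0 < α) (y₂ : ℝ) (hy : 0 < y₂) (x : ℝ) :
    HasDerivAt (fun y => besselG α (x, y))
      ((1 / (4 * π * α)) * ∫ t in Ioi (0:ℝ), -(2 * π * y₂ / α) * dk α y₂ x t) y₂ := by
  unfold besselG
  simp only
  refine HasDerivAt.const_mul _ ?_
  refine (hasDerivAt_integral_of_dominated_loc_of_deriv_le
    (s := Ioo (y₂ / 2) (2 * y₂))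
    (F' := fun y t => -(2 * π * y / α) * dk α y x t)
    (bound := fun t => (4 * π * y₂ / α) * (2 / (π * (y₂ / 2) ^ 2 / α) ^ 2) * Real.exp (-t / (4 * π)))
    (Ioo_mem_nhds (by linarith) (by linarith)) ?_ ?_ ?_ ?_ ?_ ?_).2
  · exact Eventually.of_forall fun y => (by fun_prop : Measurable _).aestronglyMeasurable
  · refine (exp_int.const_mul (1 / (π * y₂ ^ 2 / α))).mono'
      (by fun_prop : Measurable _).aestronglyMeasurable ?_
    filter_upwards [ae_restrict_mem measurableSet_Ioi] with t ht
    have ht : 0 < t := ht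
    rw [Real.norm_of_nonneg (by positivity)]
    gcongr
    refine le_trans ?_ (kern_bound1 _ t (by positivity) ht)
    gcongr
    rw [neg_div, neg_le_neg_iff, div_div, mul_comm α t]
    gcongr
    nlinarith [sq_nonneg x]
  · exact (((dk_meas α y₂).comp (measurable_const.prodMk measurable_id)).const_mul _).aestronglyMeasurable
  · filter_upwards [ae_restrict_mem measurableSet_Ioi] with t ht y hy'
    have ht : 0 < t := ht
    have hy0 : 0 < y := by linarith [hy'.1]
    unfold dk
    rw [norm_mul, norm_neg, Real.norm_of_nonneg (by positivity), Real.norm_of_nonneg (by positivity)]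
    rw [mul_assoc (4 * π * y₂ / α)]
    have : 2 * π * y / α ≤ 4 * π * y₂ / α := by
      gcongr ?_ / _
      nlinarith [hy'.2, Real.pi_pos]
    gcongr
    refine le_trans ?_ (kern_bound _ t (by positivity) ht)
    gcongr
    rw [neg_div, neg_le_neg_iff, div_div, mul_comm α t]
    gcongr
    nlinarith [sq_nonneg x, hy'.1]
  · exact exp_int.const_mul _
  · filter_upwards [ae_restrict_mem measurableSet_Ioi] with t ht y hy'
    have ht : 0 < t := ht
    have h1 : HasDerivAt (fun y : ℝ => -(π * (x ^ 2 + y ^ 2)) / (t * α)) (-(π * (2 * y)) / (t * α)) y := by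
      have := (((hasDerivAt_pow 2 y).const_add (x ^ 2)).const_mul π).neg.div_const (t * α)
      simpa using this
    refine ((h1.exp.const_mul (1 / t)).mul_const _).congr_deriv ?_
    unfold dk
    field_simp

lemma gauss_x (α y t : ℝ) (hα : 0 < α) (ht : 0 < t) :
    Integrable (fun x => dk α y x t) ∧
    ∫ x, dk α y x t = √α * (1 / (t * √t) *
      Real.exp (-((√π * y / √α) ^ 2 / t + (1 / (2 * √π)) ^ 2 * t))) := by
  have e : (fun x => dk α y x t) = fun x => (1 / t ^ 2 *
      Real.exp (-((√π * y / √α) ^ 2 / t + (1 / (2 * √π)) ^ 2 * t))) *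
      Real.exp (-(π / (t * α)) * x ^ 2) := by
    funext x
    unfold dk
    rw [mul_assoc, mul_assoc, ← Real.exp_add, ← Real.exp_add]
    congr 2
    simp only [mul_pow, div_pow]
    rw [Real.sq_sqrt Real.pi_pos.le, Real.sq_sqrt hα.le]
    field_simp
    ring
  rw [e]
  have hp : 0 < π / (t * α) := by positivity
  refine ⟨(integrable_exp_neg_mul_sq hp).const_mul _, ?_⟩
  rw [integral_const_mul, integral_gaussian]
  have : π / (π / (t * α)) = t * α := by field_simp
  rw [this, Real.sqrt_mul ht.le]
  have hsq : √t ^ 2 = t := Real.sq_sqrt ht.le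
  have : 1 / t ^ 2 * √t = 1 / (t * √t) := by
    have : 0 < √t := Real.sqrt_pos.2 ht
    field_simp
    exact hsq
  rw [← this]; ring

lemma dk_fubini (α : ℝ) (hα : 0 < α) (y : ℝ) (hy : 0 < y) :
    Integrable (fun x => ∫ t in Ioi (0:ℝ), dk α y x t) ∧
    ∫ x, ∫ t in Ioi (0:ℝ), dk α y x t = α / y * Real.exp (-y / √α) := by
  have hsα : 0 < √α := Real.sqrt_pos.2 hα
  have hsπ : 0 < √π := Real.sqrt_pos.2 Real.pi_pos
  obtain ⟨g1, g2⟩ := glasser (√π * y / √α) (1 / (2 * √π)) (by positivity) (by positivity)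
  have hI : Integrable (Function.uncurry (dk α y)) (volume.prod (volume.restrict (Ioi (0:ℝ)))) := by
    refine (integrable_prod_iff' (dk_meas α y).aestronglyMeasurable).2 ⟨?_, ?_⟩
    · filter_upwards [ae_restrict_mem measurableSet_Ioi] with t ht
      exact (gauss_x α y t hα ht).1
    · refine (g1.const_mul √α).congr ?_
      filter_upwards [ae_restrict_mem measurableSet_Ioi] with t ht
      rw [← (gauss_x α y t hα ht).2]
      refine integral_congr_ae (Eventually.of_forall fun x => ?_)
      simp only [Function.uncurry]
      rw [Real.norm_of_nonneg]
      unfold dk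
      positivity
  refine ⟨hI.integral_prod_left, ?_⟩
  rw [integral_integral_swap hI, setIntegral_congr_fun measurableSet_Ioi
    (fun t ht => (gauss_x α y t hα ht).2), integral_const_mul, g2]
  have e : -(2 * (√π * y / √α) * (1 / (2 * √π))) = -y / √α := by field_simp
  rw [e]
  have : √α ^ 2 = α := Real.sq_sqrt hα.le
  field_simp
  rw [this]

lemma log_deriv (x y : ℝ) (hy : 0 < y) :
    HasDerivAt (fun y => Real.log (√(x ^ 2 + y ^ 2))) (y / (x ^ 2 + y ^ 2)) y := by
  have h : (fun y => Real.log (√(x ^ 2 + y ^ 2))) = fun y => Real.log (x ^ 2 + y ^ 2) / 2 := by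
    funext y
    rw [Real.log_sqrt (by positivity)]
  rw [h]
  have hp : 0 < x ^ 2 + y ^ 2 := by positivity
  have := (((hasDerivAt_pow 2 y).const_add (x ^ 2)).log hp.ne').div_const 2
  refine this.congr_deriv ?_
  simp
  field_simp

lemma cauchy_int (y : ℝ) (hy : 0 < y) :
    Integrable (fun x : ℝ => y / (x ^ 2 + y ^ 2)) ∧ ∫ x : ℝ, y / (x ^ 2 + y ^ 2) = π := by
  have e : (fun x : ℝ => y / (x ^ 2 + y ^ 2)) = fun x => (1 / y) * (1 + (x / y) ^ 2)⁻¹ := by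
    funext x
    field_simp
    ring
  rw [e]
  refine ⟨(integrable_inv_one_add_sq.comp_div hy.ne').const_mul _, ?_⟩
  rw [integral_const_mul, Measure.integral_comp_div (fun x : ℝ => (1 + x ^ 2)⁻¹),
    integral_univ_inv_one_add_sq, abs_of_pos hy, smul_eq_mul]
  field_simp

/-- `∫_ℝ ∂₂Hα(x₁, y₂) dx₁ = 1/2 - (1/2) e^{-y₂/√α}`. -/
theorem stmt_15 (α : ℝ) (hα : 0 < α) (y₂ : ℝ) (hy₂ : 0 < y₂) :
    ∫ x₁ : ℝ, d2H α (x₁, y₂)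
      = 1 / 2 - (1 / 2) * Real.exp (-y₂ / Real.sqrt α) := by
  have h : ∀ x : ℝ, d2H α (x, y₂) =
      -(y₂ / (2 * α)) * (∫ t in Ioi (0:ℝ), dk α y₂ x t) + (1 / (2 * π)) * (y₂ / (x ^ 2 + y₂ ^ 2)) := by
    intro x
    have h1 := ((bessel_deriv α hα y₂ hy₂ x).const_mul α).add
      ((log_deriv x y₂ hy₂).const_mul (1 / (2 * π)))
    have h2 : d2H α (x, y₂) = _ := h1.deriv
    rw [h2, integral_const_mul]
    field_simp
    ring
  obtain ⟨a1, a2⟩ := dk_fubini α hα y₂ hy₂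
  obtain ⟨b1, b2⟩ := cauchy_int y₂ hy₂
  simp only [h]
  rw [integral_add (a1.const_mul _) (b1.const_mul _), integral_const_mul, integral_const_mul, a2, b2]
  field_simp
  ring
end

section
/- Let $\varphi \in C_c^\infty(\mathbb{H})$ be supported in $\{x_2 > \varepsilon\}$, and for $\alpha > 0$ let $H^\alpha_\varphi$ be defined as $H_\varphi$ but with $K$ replaced by $K_\alpha = K * G_\alpha$. Then for every $\theta > 0$, $H^\alpha_\varphi \to H_\varphi$ uniformly on the set $\{(x,y) \in \mathbb{H}\times\mathbb{H} : |x-y| > \theta\}$ as $\alpha \to 0$; more precisely $|H^\alpha_\varphi(x,y) - H_\varphi(x,y)| \leq C\sqrt{\alpha}\left(\frac{\|\nabla^2\varphi\|_{L^\infty}}{\theta} + \frac{\|\nabla\varphi\|_{L^\infty}}{\varepsilon^2}\right)$ on that set. -/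
open MeasureTheory Real

/-- Dot product on `ℝ × ℝ`. -/
def dotp (u v : ℝ × ℝ) : ℝ := u.1 * v.1 + u.2 * v.2

/-- The gradient of a scalar function on `ℝ × ℝ`. -/
noncomputable def grad (φ : ℝ × ℝ → ℝ) (x : ℝ × ℝ) : ℝ × ℝ :=
  (fderiv ℝ φ x (1, 0), fderiv ℝ φ x (0, 1))

/-- Reflection `ȳ = (y₁, -y₂)`. -/
def reflHP (y : ℝ × ℝ) : ℝ × ℝ := (y.1, -y.2)

/-- The symmetrized auxiliary test function `H_φ` built from a kernel `k`. -/
noncomputable def HphiK (k : ℝ × ℝ → ℝ × ℝ) (φ : ℝ × ℝ → ℝ) (x y : ℝ × ℝ) : ℝ :=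
  (1/2) * dotp (k (x - y)) (grad φ x - grad φ y)
    - (1/2) * dotp (k (x - reflHP y)) (grad φ x)
    - (1/2) * dotp (k (y - reflHP x)) (grad φ y)

/-- Sup norm of the gradient. -/
noncomputable def grad1norm (φ : ℝ × ℝ → ℝ) : ℝ := ⨆ x : ℝ × ℝ, ‖fderiv ℝ φ x‖

/-- Sup norm of the second derivative. -/
noncomputable def grad2norm (φ : ℝ × ℝ → ℝ) : ℝ := ⨆ x : ℝ × ℝ, ‖fderiv ℝ (fderiv ℝ φ) x‖


/-- Two-dimensional Gaussian integral. -/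
lemma gauss2 (c : ℝ) (hc : 0 < c) :
    Integrable (fun y : ℝ × ℝ => Real.exp (-(π * (y.1 ^ 2 + y.2 ^ 2)) / c)) ∧
    ∫ y : ℝ × ℝ, Real.exp (-(π * (y.1 ^ 2 + y.2 ^ 2)) / c) = c := by
  have hb : 0 < π / c := div_pos pi_pos hc
  have e : (fun y : ℝ × ℝ => Real.exp (-(π * (y.1 ^ 2 + y.2 ^ 2)) / c)) =
      fun y : ℝ × ℝ => Real.exp (-(π / c) * y.1 ^ 2) * Real.exp (-(π / c) * y.2 ^ 2) := by
    funext y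
    rw [← Real.exp_add]
    congr 1
    field_simp
    ring
  have hi := integrable_exp_neg_mul_sq hb
  rw [e]
  constructor
  · exact hi.mul_prod hi
  · rw [Measure.volume_eq_prod, integral_prod_mul (fun x : ℝ => Real.exp (-(π / c) * x ^ 2))
      (fun x : ℝ => Real.exp (-(π / c) * x ^ 2)), integral_gaussian, Real.mul_self_sqrt]
    · field_simp
    · positivity

/-- Fubini for mixtures of Gaussians. -/
lemma mix (c : ℝ) (hc : 0 < c) (w : ℝ → ℝ) (hwm : Measurable w)
    (hw0 : ∀ t, 0 < t → 0 ≤ w t)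
    (hw : IntegrableOn (fun t => t * w t) (Set.Ioi 0)) :
    Integrable (fun y : ℝ × ℝ => ∫ t in Set.Ioi (0 : ℝ),
      w t * Real.exp (-(π * (y.1 ^ 2 + y.2 ^ 2)) / (t * c))) ∧
    ∫ y : ℝ × ℝ, (∫ t in Set.Ioi (0 : ℝ),
      w t * Real.exp (-(π * (y.1 ^ 2 + y.2 ^ 2)) / (t * c)))
      = c * ∫ t in Set.Ioi (0 : ℝ), t * w t := by
  have hm : Measurable (fun p : (ℝ × ℝ) × ℝ =>
      w p.2 * Real.exp (-(π * (p.1.1 ^ 2 + p.1.2 ^ 2)) / (p.2 * c))) := by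
    fun_prop
  have inner : ∀ t ∈ Set.Ioi (0 : ℝ), ∫ y : ℝ × ℝ,
      w t * Real.exp (-(π * (y.1 ^ 2 + y.2 ^ 2)) / (t * c)) = c * (t * w t) := by
    intro t ht
    rw [integral_const_mul, (gauss2 (t * c) (mul_pos ht hc)).2]
    ring
  have hint : Integrable (fun p : (ℝ × ℝ) × ℝ =>
      w p.2 * Real.exp (-(π * (p.1.1 ^ 2 + p.1.2 ^ 2)) / (p.2 * c)))
      ((volume : Measure (ℝ × ℝ)).prod (volume.restrict (Set.Ioi (0 : ℝ)))) := by
    rw [integrable_prod_iff' hm.aestronglyMeasurable]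
    constructor
    · filter_upwards [ae_restrict_mem measurableSet_Ioi] with t ht
      exact (gauss2 (t * c) (mul_pos ht hc)).1.const_mul _
    · refine (hw.const_mul c).congr ?_
      filter_upwards [ae_restrict_mem measurableSet_Ioi] with t ht
      rw [← inner t ht]
      refine integral_congr_ae (Filter.Eventually.of_forall fun y => ?_)
      simp only
      rw [Real.norm_of_nonneg]
      exact mul_nonneg (hw0 t ht) (Real.exp_pos _).le
  refine ⟨hint.integral_prod_left, ?_⟩
  rw [integral_integral_swap (f := fun (y : ℝ × ℝ) t =>
    w t * Real.exp (-(π * (y.1 ^ 2 + y.2 ^ 2)) / (t * c))) hint]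
  rw [setIntegral_congr_fun measurableSet_Ioi inner, integral_const_mul]

lemma exp1 : IntegrableOn (fun t : ℝ => Real.exp (-t / (4 * π))) (Set.Ioi 0) ∧
    ∫ t in Set.Ioi (0 : ℝ), Real.exp (-t / (4 * π)) = 4 * π := by
  have hb : -(1 / (4 * π)) < 0 := by
    have := pi_pos
    simp only [neg_lt_zero]; positivity
  have e : (fun t : ℝ => Real.exp (-t / (4 * π))) =
      fun t : ℝ => Real.exp (-(1 / (4 * π)) * t) := by
    funext t; congr 1; ring
  rw [e]
  refine ⟨integrableOn_exp_mul_Ioi hb 0, ?_⟩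
  rw [integral_exp_mul_Ioi hb]
  have := pi_pos
  simp

lemma exp2 : IntegrableOn (fun t : ℝ => t * Real.exp (-t / (4 * π))) (Set.Ioi 0) ∧
    ∫ t in Set.Ioi (0 : ℝ), t * Real.exp (-t / (4 * π)) = 16 * π ^ 2 := by
  have hpi := pi_pos
  have hb : 0 < 1 / (4 * π) := by positivity
  constructor
  · have := integrableOn_rpow_mul_exp_neg_mul_rpow (p := 1) (s := 1) (b := 1 / (4 * π))
      (by norm_num) (by norm_num) hb
    refine this.congr_fun (fun t _ => ?_) measurableSet_Ioi
    simp only [Real.rpow_one]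
    congr 2
    ring
  · have := Real.integral_rpow_mul_exp_neg_mul_Ioi (a := 2) (r := 1 / (4 * π)) (by norm_num) hb
    have h2 : Real.Gamma 2 = 1 := Real.Gamma_two
    rw [h2, one_div_one_div, mul_one, Real.rpow_two] at this
    rw [show 16 * π ^ 2 = (4 * π) ^ 2 by ring, ← this]
    refine setIntegral_congr_fun measurableSet_Ioi (fun t _ => ?_)
    norm_num
    left
    ring

lemma G_eq (α : ℝ) (y : ℝ × ℝ) : besselG α y = (1 / (4 * π * α)) * ∫ t in Set.Ioi (0 : ℝ),
    ((1 / t) * Real.exp (-t / (4 * π))) * Real.exp (-(π * (y.1 ^ 2 + y.2 ^ 2)) / (t * α)) := by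
  unfold besselG
  congr 1
  congr 1
  funext t
  ring

lemma G_nonneg (α : ℝ) (hα : 0 < α) (y : ℝ × ℝ) : 0 ≤ besselG α y := by
  unfold besselG
  have := pi_pos
  refine mul_nonneg (by positivity) (setIntegral_nonneg measurableSet_Ioi fun t ht => ?_)
  have : 0 < t := ht
  positivity

lemma G_int (α : ℝ) (hα : 0 < α) : Integrable (besselG α) ∧ ∫ y, besselG α y = 1 := by
  have hpi := pi_pos
  have e : ∀ t ∈ Set.Ioi (0:ℝ), Real.exp (-t / (4 * π)) =
      t * ((1 / t) * Real.exp (-t / (4 * π))) := by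
    intro t ht
    have : t ≠ 0 := ne_of_gt ht
    field_simp
  obtain ⟨h1, h2⟩ := mix α hα (fun t => (1 / t) * Real.exp (-t / (4 * π))) (by fun_prop)
    (fun t ht => by positivity) (exp1.1.congr_fun e measurableSet_Ioi)
  rw [← setIntegral_congr_fun measurableSet_Ioi e, exp1.2] at h2
  have e2 := funext (G_eq α)
  rw [e2]
  refine ⟨h1.const_mul _, ?_⟩
  rw [integral_const_mul, h2]
  field_simp

/-- majorant for the second moment -/
noncomputable def Mom (α : ℝ) (y : ℝ × ℝ) : ℝ := (1 / (4 * π * α)) * ∫ t in Set.Ioi (0 : ℝ),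
    ((2 * α / π) * Real.exp (-t / (4 * π))) *
      Real.exp (-(π * (y.1 ^ 2 + y.2 ^ 2)) / (t * (2 * α)))

lemma Mom_int (α : ℝ) (hα : 0 < α) : Integrable (Mom α) ∧ ∫ y, Mom α y = 16 * α := by
  have hpi := pi_pos
  have e : (fun t : ℝ => (2 * α / π) * (t * Real.exp (-t / (4 * π)))) =
    fun t => t * ((2 * α / π) * Real.exp (-t / (4 * π))) := by
    funext t; ring
  obtain ⟨h1, h2⟩ := mix (2 * α) (by positivity)
    (fun t => (2 * α / π) * Real.exp (-t / (4 * π))) (by fun_prop)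
    (fun t ht => by positivity) (by rw [← e]; exact exp2.1.const_mul _)
  rw [← e, integral_const_mul, exp2.2] at h2
  unfold Mom
  refine ⟨h1.const_mul _, ?_⟩
  rw [integral_const_mul, h2]
  field_simp
  norm_num

lemma qG_le_Mom (α : ℝ) (hα : 0 < α) (y : ℝ × ℝ) :
    (y.1 ^ 2 + y.2 ^ 2) * besselG α y ≤ Mom α y := by
  have hpi := pi_pos
  rw [G_eq, Mom, mul_left_comm, ← integral_const_mul]
  refine mul_le_mul_of_nonneg_left ?_ (by positivity)
  refine integral_mono_of_nonneg ?_ ?_ ?_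
  · filter_upwards [ae_restrict_mem measurableSet_Ioi] with t ht
    have : 0 < t := ht
    simp only [Pi.zero_apply]
    positivity
  · have : IntegrableOn (fun t : ℝ => (2 * α / π) * Real.exp (-t / (4 * π))) (Set.Ioi 0) :=
      exp1.1.const_mul _
    refine Integrable.mono' this (Measurable.aestronglyMeasurable (by fun_prop)) ?_
    filter_upwards [ae_restrict_mem measurableSet_Ioi] with t ht
    have ht : 0 < t := ht
    rw [Real.norm_of_nonneg (by positivity)]
    refine mul_le_of_le_one_right (by positivity) (Real.exp_le_one_iff.2 ?_)
    apply div_nonpos_of_nonpos_of_nonneg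
    · have : 0 ≤ π * (y.1 ^ 2 + y.2 ^ 2) := by positivity
      linarith
    · positivity
  · filter_upwards [ae_restrict_mem measurableSet_Ioi] with t ht
    have ht : 0 < t := ht
    set q := y.1 ^ 2 + y.2 ^ 2 with hq
    set u := (π * q) / (t * (2 * α)) with hu
    have hqu : q = u * (t * (2 * α)) / π := by rw [hu]; field_simp
    have e1 : -(π * q) / (t * α) = -u + -u := by rw [hu]; field_simp; ring
    have e2 : -(π * q) / (t * (2 * α)) = -u := by rw [hu]; ring
    have hu1 : u * Real.exp (-u) ≤ 1 := by
      have := Real.add_one_le_exp u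
      rw [Real.exp_neg, ← div_eq_mul_inv, div_le_one (Real.exp_pos _)]
      linarith
    rw [e1, e2, Real.exp_add]
    calc q * (1 / t * Real.exp (-t / (4 * π)) * (Real.exp (-u) * Real.exp (-u)))
        = (u * Real.exp (-u)) * (2 * α / π * Real.exp (-t / (4 * π)) * Real.exp (-u)) := by
          rw [hqu]; field_simp
      _ ≤ 1 * (2 * α / π * Real.exp (-t / (4 * π)) * Real.exp (-u)) :=
          mul_le_mul_of_nonneg_right hu1 (by positivity)
      _ = _ := one_mul _

lemma Mom_le (α : ℝ) (hα : 0 < α) (y : ℝ × ℝ) : Mom α y ≤ 2 / π := by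
  have hpi := pi_pos
  have : ∫ t in Set.Ioi (0 : ℝ), ((2 * α / π) * Real.exp (-t / (4 * π))) *
      Real.exp (-(π * (y.1 ^ 2 + y.2 ^ 2)) / (t * (2 * α))) ≤
      ∫ t in Set.Ioi (0 : ℝ), (2 * α / π) * Real.exp (-t / (4 * π)) := by
    refine integral_mono_of_nonneg ?_ (exp1.1.const_mul _) ?_
    · filter_upwards [ae_restrict_mem measurableSet_Ioi] with t ht
      simp only [Pi.zero_apply]
      positivity
    · filter_upwards [ae_restrict_mem measurableSet_Ioi] with t ht
      have ht : 0 < t := ht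
      refine mul_le_of_le_one_right (by positivity) (Real.exp_le_one_iff.2 ?_)
      apply div_nonpos_of_nonpos_of_nonneg
      · have : 0 ≤ π * (y.1 ^ 2 + y.2 ^ 2) := by positivity
        linarith
      · positivity
  rw [integral_const_mul, exp1.2] at this
  unfold Mom
  calc _ ≤ 1 / (4 * π * α) * (2 * α / π * (4 * π)) :=
        mul_le_mul_of_nonneg_left this (by positivity)
    _ = 2 / π := by field_simp

/-- truncated inverse -/
noncomputable def finv (s : ℝ) : ℝ → ℝ := (Set.Iio s).indicator (fun r => r⁻¹)

lemma finv_int (s : ℝ) (hs : 0 < s) : Integrable (fun x : ℝ × ℝ => finv s ‖x‖) ∧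
    ∫ x : ℝ × ℝ, finv s ‖x‖ = 2 * (volume.real (Metric.ball (0 : ℝ × ℝ) 1) * s) := by
  have hd : Module.finrank ℝ (ℝ × ℝ) = 2 := by simp
  have e : ∀ r ∈ Set.Ioi (0:ℝ), (Set.Iio s).indicator (fun _ => (1:ℝ)) r =
      r ^ (Module.finrank ℝ (ℝ × ℝ) - 1) • finv s r := by
    intro r hr
    have : r ≠ 0 := ne_of_gt hr
    rw [hd, finv]
    by_cases h : r ∈ Set.Iio s
    · simp only [Set.indicator_of_mem h]; simp [this]
    · simp only [Set.indicator_of_notMem h]; simp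
  constructor
  · rw [integrable_fun_norm_addHaar volume (f := finv s)]
    refine IntegrableOn.congr_fun ?_ e measurableSet_Ioi
    rw [IntegrableOn, integrable_indicator_iff measurableSet_Iio, IntegrableOn,
      Measure.restrict_restrict measurableSet_Iio]
    rw [Set.inter_comm, Set.Ioi_inter_Iio]
    exact integrableOn_const (by simp)
  · rw [integral_fun_norm_addHaar volume (finv s), ← setIntegral_congr_fun measurableSet_Ioi e,
      setIntegral_indicator measurableSet_Iio, Set.Ioi_inter_Iio, hd]
    simp [hs.le]

/-- Euclidean length -/
noncomputable def eN (x : ℝ × ℝ) : ℝ := Real.sqrt (x.1 ^ 2 + x.2 ^ 2)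

lemma eN_eq (x : ℝ × ℝ) : eN x = ‖(⟨x.1, x.2⟩ : ℂ)‖ := by
  rw [Complex.norm_eq_sqrt_sq_add_sq]; rfl

lemma eN_sq (x : ℝ × ℝ) : eN x ^ 2 = x.1 ^ 2 + x.2 ^ 2 := Real.sq_sqrt (by positivity)

lemma norm_le_eN (x : ℝ × ℝ) : ‖x‖ ≤ eN x := by
  rw [Prod.norm_def]
  refine max_le ?_ ?_
  · exact Real.abs_le_sqrt (by nlinarith [sq_nonneg x.2])
  · exact Real.abs_le_sqrt (by nlinarith [sq_nonneg x.1])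

lemma eN_pos (x : ℝ × ℝ) (hx : x ≠ 0) : 0 < eN x :=
  (norm_pos_iff.2 hx).trans_le (norm_le_eN x)

lemma eN_tri (z y : ℝ × ℝ) : eN z ≤ eN (z - y) + eN y := by
  simp only [eN_eq]
  have := norm_add_le (⟨(z - y).1, (z - y).2⟩ : ℂ) ⟨y.1, y.2⟩
  have e : (⟨z.1, z.2⟩ : ℂ) = (⟨(z - y).1, (z - y).2⟩ : ℂ) + ⟨y.1, y.2⟩ := by
    apply Complex.ext <;> simp
  rw [e]
  exact this

lemma cdiff (a b : ℝ × ℝ) (ha : a ≠ 0) (hb : b ≠ 0) :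
    ‖(⟨a.1, a.2⟩ : ℂ)⁻¹ - (⟨b.1, b.2⟩ : ℂ)⁻¹‖ = eN (b - a) / (eN a * eN b) := by
  have ha' : (⟨a.1, a.2⟩ : ℂ) ≠ 0 := by
    intro h; have := eN_pos a ha; rw [eN_eq, h] at this; simp at this
  have hb' : (⟨b.1, b.2⟩ : ℂ) ≠ 0 := by
    intro h; have := eN_pos b hb; rw [eN_eq, h] at this; simp at this
  rw [inv_sub_inv ha' hb', norm_div, norm_mul]
  simp only [eN_eq]
  congr 2

lemma K1diff (a b : ℝ × ℝ) (ha : a ≠ 0) (hb : b ≠ 0) :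
    |(BSK a).1 - (BSK b).1| ≤ eN (b - a) / (eN a * eN b) := by
  have hpi := pi_pos
  have h1 := (Complex.abs_im_le_norm ((⟨a.1, a.2⟩ : ℂ)⁻¹ - (⟨b.1, b.2⟩ : ℂ)⁻¹))
  rw [cdiff a b ha hb] at h1
  have e : (BSK a).1 - (BSK b).1 =
      (1 / (2 * π)) * ((⟨a.1, a.2⟩ : ℂ)⁻¹ - (⟨b.1, b.2⟩ : ℂ)⁻¹).im := by
    simp only [BSK, Complex.sub_im, Complex.inv_im, Complex.normSq_mk, ← pow_two]
    rw [mul_sub]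
    congr 1 <;> rw [div_mul_div_comm, one_mul]
  rw [e, abs_mul, abs_of_pos (by positivity)]
  refine (mul_le_of_le_one_left (abs_nonneg _) ?_).trans h1
  rw [div_le_one (by positivity)]
  linarith [pi_gt_three]

lemma K2diff (a b : ℝ × ℝ) (ha : a ≠ 0) (hb : b ≠ 0) :
    |(BSK a).2 - (BSK b).2| ≤ eN (b - a) / (eN a * eN b) := by
  have hpi := pi_pos
  have h1 := (Complex.abs_re_le_norm ((⟨a.1, a.2⟩ : ℂ)⁻¹ - (⟨b.1, b.2⟩ : ℂ)⁻¹))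
  rw [cdiff a b ha hb] at h1
  have e : (BSK a).2 - (BSK b).2 =
      (1 / (2 * π)) * ((⟨a.1, a.2⟩ : ℂ)⁻¹ - (⟨b.1, b.2⟩ : ℂ)⁻¹).re := by
    simp only [BSK, Complex.sub_re, Complex.inv_re, Complex.normSq_mk, ← pow_two]
    rw [mul_sub]
    congr 1 <;> rw [div_mul_div_comm, one_mul]
  rw [e, abs_mul, abs_of_pos (by positivity)]
  refine (mul_le_of_le_one_left (abs_nonneg _) ?_).trans h1
  rw [div_le_one (by positivity)]
  linarith [pi_gt_three]

/-- the constant -/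
noncomputable def DD : ℝ := 33 + 2 * volume.real (Metric.ball (0 : ℝ × ℝ) 1)

lemma DD_pos : 0 < DD := by
  have : 0 ≤ volume.real (Metric.ball (0 : ℝ × ℝ) 1) := measureReal_nonneg
  unfold DD; linarith

lemma kernel_est (k : ℝ × ℝ → ℝ) (hk : Measurable k)
    (hkd : ∀ a b : ℝ × ℝ, a ≠ 0 → b ≠ 0 → |k a - k b| ≤ eN (b - a) / (eN a * eN b))
    (α : ℝ) (hα : 0 < α) (z : ℝ × ℝ) (hz : z ≠ 0) :
    |(∫ y : ℝ × ℝ, k (z - y) * besselG α y) - k z| ≤ DD * Real.sqrt α / eN z ^ 2 := by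
  have hpi := pi_pos
  set s := Real.sqrt α with hs
  have hs0 : 0 < s := Real.sqrt_pos.2 hα
  have hss : s ^ 2 = α := Real.sq_sqrt hα.le
  obtain ⟨hGi, hG1⟩ := G_int α hα
  obtain ⟨hMi, hM1⟩ := Mom_int α hα
  obtain ⟨hFi, hF1⟩ := finv_int s hs0
  have hFi' := hFi.comp_sub_left z
  have hF1' := (integral_sub_left_eq_self (fun x : ℝ × ℝ => finv s ‖x‖) volume z).trans hF1
  have hzp := eN_pos z hz
  set B : ℝ × ℝ → ℝ := fun y =>
    (1 / eN z ^ 2) * (s * besselG α y + (2 / s) * Mom α y + finv s ‖z - y‖) with hB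
  have hGM : Integrable (fun y => s * besselG α y + (2 / s) * Mom α y) :=
    (hGi.const_mul s).add (hMi.const_mul (2 / s))
  have hBi : Integrable B := (((hGi.const_mul s).add (hMi.const_mul (2 / s))).add hFi').const_mul _
  have hB1 : ∫ y, B y = DD * s / eN z ^ 2 := by
    rw [hB, integral_const_mul, integral_add hGM hFi',
      integral_add (hGi.const_mul s) (hMi.const_mul (2 / s)), integral_const_mul,
      integral_const_mul, hG1, hM1, hF1', DD, ← hss]
    field_simp
    ring
  have hbound : ∀ᵐ y : ℝ × ℝ, ‖(k (z - y) - k z) * besselG α y‖ ≤ B y := by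
    have : ∀ᵐ y : ℝ × ℝ, y ≠ z := by
      simp [ae_iff]
    filter_upwards [this] with y hy
    have hzy : z - y ≠ 0 := sub_ne_zero.2 (Ne.symm hy)
    have hG0 := G_nonneg α hα y
    have hw := eN_pos _ hzy
    have hq := qG_le_Mom α hα y
    rw [← eN_sq] at hq
    have hM := Mom_le α hα y
    have hy0 : 0 ≤ eN y := Real.sqrt_nonneg _
    have hM0 : 0 ≤ Mom α y := le_trans (by positivity) hq
    have hn : 0 < ‖z - y‖ := norm_pos_iff.2 hzy
    have hnle := norm_le_eN (z - y)
    rw [norm_mul, Real.norm_eq_abs, Real.norm_of_nonneg hG0]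
    have h1 := hkd (z - y) z hzy hz
    rw [sub_sub_cancel] at h1
    have h2 : eN z * eN y / eN (z - y) ≤ eN y + eN y ^ 2 / eN (z - y) := by
      rw [div_le_iff₀ hw, add_mul, div_mul_cancel₀ _ hw.ne']
      nlinarith [mul_le_mul_of_nonneg_right (eN_tri z y) hy0]
    have h3 : eN y * besselG α y ≤ s * besselG α y + (1 / s) * Mom α y := by
      have : eN y ≤ s + (1 / s) * eN y ^ 2 := by
        rw [← sub_nonneg]
        have : s + (1 / s) * eN y ^ 2 - eN y = (s ^ 2 + eN y ^ 2 - s * eN y) / s := by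
          field_simp
        rw [this]
        apply div_nonneg _ hs0.le
        nlinarith [sq_nonneg (s - eN y), mul_nonneg hs0.le hy0]
      calc _ ≤ (s + (1 / s) * eN y ^ 2) * besselG α y := mul_le_mul_of_nonneg_right this hG0
        _ = s * besselG α y + (1 / s) * (eN y ^ 2 * besselG α y) := by ring
        _ ≤ _ := by gcongr
    have h4 : eN y ^ 2 / eN (z - y) * besselG α y ≤ (1 / s) * Mom α y + finv s ‖z - y‖ := by
      have h5 : eN y ^ 2 / eN (z - y) * besselG α y ≤ Mom α y / ‖z - y‖ := by
        rw [div_mul_eq_mul_div]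
        gcongr
      refine h5.trans ?_
      by_cases h : ‖z - y‖ ∈ Set.Iio s
      · rw [finv, Set.indicator_of_mem h]
        have : Mom α y ≤ 1 := hM.trans (by rw [div_le_one hpi]; linarith [pi_gt_three])
        have h6 : Mom α y / ‖z - y‖ ≤ ‖z - y‖⁻¹ := by
          rw [div_eq_mul_inv]
          exact mul_le_of_le_one_left (by positivity) this
        have : 0 ≤ (1 / s) * Mom α y := by positivity
        linarith
      · rw [finv, Set.indicator_of_notMem h, add_zero, one_div, inv_mul_eq_div]
        have : s ≤ ‖z - y‖ := not_lt.1 h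
        gcongr
    calc |k (z - y) - k z| * besselG α y ≤ eN y / (eN (z - y) * eN z) * besselG α y :=
          mul_le_mul_of_nonneg_right h1 hG0
      _ = (1 / eN z ^ 2) * (eN z * eN y / eN (z - y) * besselG α y) := by field_simp
      _ ≤ (1 / eN z ^ 2) * ((eN y + eN y ^ 2 / eN (z - y)) * besselG α y) := by gcongr
      _ ≤ B y := by
          rw [hB]
          refine mul_le_mul_of_nonneg_left ?_ (by positivity)
          rw [add_mul, show (2 / s) * Mom α y = (1 / s) * Mom α y + (1 / s) * Mom α y by ring]
          linarith
  have hdi : Integrable (fun y => (k (z - y) - k z) * besselG α y) := by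
    refine hBi.mono' ?_ hbound
    refine AEStronglyMeasurable.mul ?_ hGi.aestronglyMeasurable
    exact (by fun_prop : Measurable fun y => k (z - y) - k z).aestronglyMeasurable
  have e : (∫ y : ℝ × ℝ, k (z - y) * besselG α y) - k z =
      ∫ y, (k (z - y) - k z) * besselG α y := by
    have : ∀ y, k (z - y) * besselG α y = (k (z - y) - k z) * besselG α y + k z * besselG α y := by
      intro y; ring
    simp_rw [this]
    rw [integral_add hdi (hGi.const_mul _), integral_const_mul, hG1]
    ring
  rw [e, ← hB1, ← Real.norm_eq_abs]
  exact norm_integral_le_of_norm_le hBi hbound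

lemma dot_est (α : ℝ) (hα : 0 < α) (z : ℝ × ℝ) (hz : z ≠ 0) (v : ℝ × ℝ) (L : ℝ)
    (h1 : |v.1| ≤ L) (h2 : |v.2| ≤ L) :
    |dotp (BSKα α z) v - dotp (BSK z) v| ≤ 2 * (DD * Real.sqrt α / eN z ^ 2 * L) := by
  have k1 := kernel_est (fun x => (BSK x).1) (by unfold BSK; fun_prop) K1diff α hα z hz
  have k2 := kernel_est (fun x => (BSK x).2) (by unfold BSK; fun_prop) K2diff α hα z hz
  have e : dotp (BSKα α z) v - dotp (BSK z) v =
      ((BSKα α z).1 - (BSK z).1) * v.1 + ((BSKα α z).2 - (BSK z).2) * v.2 := by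
    unfold dotp; ring
  rw [e]
  have := DD_pos
  have j1 : |(BSKα α z).1 - (BSK z).1| * |v.1| ≤ DD * Real.sqrt α / eN z ^ 2 * L :=
    mul_le_mul k1 h1 (abs_nonneg _) (by positivity)
  have j2 : |(BSKα α z).2 - (BSK z).2| * |v.2| ≤ DD * Real.sqrt α / eN z ^ 2 * L :=
    mul_le_mul k2 h2 (abs_nonneg _) (by positivity)
  rw [← abs_mul] at j1 j2
  refine (abs_add_le _ _).trans ?_
  linarith

lemma apply_le (T : ℝ × ℝ →L[ℝ] ℝ) (L : ℝ) (h : ‖T‖ ≤ L) :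
    |T (1, 0)| ≤ L ∧ |T (0, 1)| ≤ L := by
  constructor
  · have := T.le_opNorm (1, 0)
    simp [Prod.norm_def] at this
    linarith
  · have := T.le_opNorm (0, 1)
    simp [Prod.norm_def] at this
    linarith

/-- reflected term -/
lemma refl_est (ε : ℝ) (hε : 0 < ε) (φ : ℝ × ℝ → ℝ) (hsupp : Function.support φ ⊆ {x : ℝ × ℝ | ε < x.2})
    (hb : ∀ x, ‖fderiv ℝ φ x‖ ≤ grad1norm φ) (α : ℝ) (hα : 0 < α) (x y : ℝ × ℝ)
    (hx : 0 < x.2) (hy : 0 < y.2) :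
    |dotp (BSKα α (x - reflHP y)) (grad φ x) - dotp (BSK (x - reflHP y)) (grad φ x)| ≤
      2 * (DD * Real.sqrt α * (grad1norm φ / ε ^ 2)) := by
  have hD := DD_pos
  have hg0 : 0 ≤ grad1norm φ := (norm_nonneg _).trans (hb x)
  by_cases h : x ∈ tsupport φ
  · have hxε : ε ≤ x.2 := by
      have hc : IsClosed {x : ℝ × ℝ | ε ≤ x.2} := isClosed_le continuous_const continuous_snd
      exact closure_minimal (hsupp.trans fun a (ha : ε < a.2) => ha.le) hc h
    have h2 : (x - reflHP y).2 = x.2 + y.2 := by simp [reflHP]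
    have hz : x - reflHP y ≠ 0 := by
      intro h0; rw [h0] at h2; simp at h2; linarith
    have hle : ε ≤ eN (x - reflHP y) := by
      have h3 : |(x - reflHP y).2| ≤ eN (x - reflHP y) :=
        (le_max_right _ _).trans (norm_le_eN (x - reflHP y))
      rw [h2] at h3
      linarith [le_abs_self (x.2 + y.2)]
    obtain ⟨a1, a2⟩ := apply_le _ _ (hb x)
    refine (dot_est α hα _ hz (grad φ x) _ a1 a2).trans ?_
    rw [div_mul_eq_mul_div, mul_div_assoc]
    gcongr
  · have : fderiv ℝ φ x = 0 := by
      by_contra h0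
      exact h (support_fderiv_subset ℝ h0)
    simp only [grad, this, dotp]
    simp
    positivity

lemma combine (P Q A1 A2 B1 B2 C1 C2 : ℝ) (hP : 0 ≤ P) (t1 : |A1 - A2| ≤ 2 * P)
    (t2 : |B1 - B2| ≤ 2 * Q) (t3 : |C1 - C2| ≤ 2 * Q) :
    |(1 / 2 * A1 - 1 / 2 * B1 - 1 / 2 * C1) - (1 / 2 * A2 - 1 / 2 * B2 - 1 / 2 * C2)|
      ≤ 2 * P + 2 * Q := by
  rw [abs_le] at t1 t2 t3 ⊢
  constructor
  · linarith [t1.1, t1.2, t2.1, t2.2, t3.1, t3.2]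
  · linarith [t1.1, t1.2, t2.1, t2.2, t3.1, t3.2]

lemma cd1 (φ : ℝ × ℝ → ℝ) (hφ : ContDiff ℝ (⊤ : ℕ∞) φ) : ContDiff ℝ 1 (fderiv ℝ φ) :=
  hφ.fderiv_right (by norm_cast)

lemma bdd1 (φ : ℝ × ℝ → ℝ) (hφ : ContDiff ℝ (⊤ : ℕ∞) φ) (hcs : HasCompactSupport φ) (x : ℝ × ℝ) :
    ‖fderiv ℝ φ x‖ ≤ grad1norm φ := by
  have h : BddAbove (Set.range fun x => ‖fderiv ℝ φ x‖) :=
    (cd1 φ hφ).continuous.norm.bddAbove_range_of_hasCompactSupport (hcs.fderiv ℝ).norm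
  unfold grad1norm
  exact le_ciSup h x

lemma bdd_gen {F : Type*} [NormedAddCommGroup F] [NormedSpace ℝ F] (f : ℝ × ℝ → F)
    (hf : ContDiff ℝ 1 f) (hc : HasCompactSupport f) :
    BddAbove (Set.range fun x => ‖fderiv ℝ f x‖) :=
  (hf.continuous_fderiv one_ne_zero).norm.bddAbove_range_of_hasCompactSupport (hc.fderiv ℝ).norm

lemma g2_nonneg (φ : ℝ × ℝ → ℝ) : 0 ≤ grad2norm φ := by
  unfold grad2norm
  exact Real.iSup_nonneg fun x => norm_nonneg (fderiv ℝ (fderiv ℝ φ) x)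

lemma bdd2 (φ : ℝ × ℝ → ℝ) (hφ : ContDiff ℝ (⊤ : ℕ∞) φ) (hcs : HasCompactSupport φ) (x : ℝ × ℝ) :
    ‖fderiv ℝ (fderiv ℝ φ) x‖ ≤ grad2norm φ := by
  have h : BddAbove (Set.range fun x => ‖fderiv ℝ (fderiv ℝ φ) x‖) :=
    bdd_gen (fderiv ℝ φ) (cd1 φ hφ) (hcs.fderiv ℝ)
  unfold grad2norm
  exact le_ciSup h x

lemma lip (φ : ℝ × ℝ → ℝ) (hφ : ContDiff ℝ (⊤ : ℕ∞) φ) (L : ℝ)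
    (hb : ∀ x, ‖fderiv ℝ (fderiv ℝ φ) x‖ ≤ L) (x y : ℝ × ℝ) :
    ‖fderiv ℝ φ x - fderiv ℝ φ y‖ ≤ L * ‖x - y‖ :=
  convex_univ.norm_image_sub_le_of_norm_fderiv_le
    (fun a _ => (cd1 φ hφ).differentiable one_ne_zero a) (fun a _ => hb a)
    (Set.mem_univ y) (Set.mem_univ x)

/-- `H^α_φ → H_φ` uniformly on `{|x-y| > θ}` as `α → 0`, with
the explicit rate `C√α (‖∇²φ‖_∞/θ + ‖∇φ‖_∞/ε²)`. -/
theorem stmt_19 :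
    ∃ C > 0, ∀ (ε : ℝ), 0 < ε → ∀ φ : ℝ × ℝ → ℝ,
      ContDiff ℝ (⊤ : ℕ∞) φ → HasCompactSupport φ →
      (Function.support φ ⊆ {x : ℝ × ℝ | ε < x.2}) →
      ∀ θ : ℝ, 0 < θ → ∀ α : ℝ, 0 < α →
      ∀ x y : ℝ × ℝ, 0 < x.2 → 0 < y.2 → θ < Real.sqrt ((x.1 - y.1) ^ 2 + (x.2 - y.2) ^ 2) →
        |HphiK (BSKα α) φ x y - HphiK BSK φ x y|
          ≤ C * Real.sqrt α * (grad2norm φ / θ + grad1norm φ / ε ^ 2) := by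
  have hD := DD_pos
  refine ⟨2 * DD, by positivity, ?_⟩
  intro ε hε φ hφ hcs hsupp θ hθ α hα x y hx hy hxy
  have hs0 : 0 < Real.sqrt α := Real.sqrt_pos.2 hα
  have hb1 := bdd1 φ hφ hcs
  have hb2 := bdd2 φ hφ hcs
  have hg0 : 0 ≤ grad2norm φ := g2_nonneg φ
  have hlip := lip φ hφ _ hb2 x y
  have hxy' : θ < eN (x - y) := by
    simpa only [eN, Prod.fst_sub, Prod.snd_sub] using hxy
  have hz : x - y ≠ 0 := by
    intro h; rw [h] at hxy'; simp [eN] at hxy'; linarith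
  have hzp := eN_pos _ hz
  have t1 : |dotp (BSKα α (x - y)) (grad φ x - grad φ y) - dotp (BSK (x - y)) (grad φ x - grad φ y)|
      ≤ 2 * (DD * Real.sqrt α * (grad2norm φ / θ)) := by
    obtain ⟨a1, a2⟩ := apply_le _ _ (hlip.trans
      (mul_le_mul_of_nonneg_left (norm_le_eN (x - y)) hg0))
    have a1' : |(grad φ x - grad φ y).1| ≤ grad2norm φ * eN (x - y) := by
      simpa only [grad, Prod.fst_sub, sub_apply] using a1
    have a2' : |(grad φ x - grad φ y).2| ≤ grad2norm φ * eN (x - y) := by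
      simpa only [grad, Prod.snd_sub, sub_apply] using a2
    refine (dot_est α hα _ hz (grad φ x - grad φ y) _ a1' a2').trans ?_
    have : DD * Real.sqrt α / eN (x - y) ^ 2 * (grad2norm φ * eN (x - y)) =
        DD * Real.sqrt α * (grad2norm φ / eN (x - y)) := by
      field_simp
    rw [this]
    gcongr
  have t2 := refl_est ε hε φ hsupp hb1 α hα x y hx hy
  have t3 := refl_est ε hε φ hsupp hb1 α hα y x hy hx
  have hP : 0 ≤ DD * Real.sqrt α * (grad2norm φ / θ) := by positivity
  have e : 2 * DD * Real.sqrt α * (grad2norm φ / θ + grad1norm φ / ε ^ 2) =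
      2 * (DD * Real.sqrt α * (grad2norm φ / θ)) +
      2 * (DD * Real.sqrt α * (grad1norm φ / ε ^ 2)) := by ring
  rw [e]
  unfold HphiK
  exact combine _ _ _ _ _ _ _ _ hP t1 t2 t3
end
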